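/- Let C be a normal, closed cone with nonempty interior in a real Banach space and let f : int C → int C be order-preserving and subhomogeneous. Assume that C is regular or that f is γ-condensing or τ-condensing. Then the following are equivalent: (a) the fixed point set Fix(f) is nonempty and bounded in Thompson's metric d_T; (b) there exist x, y ∈ int C with f(x) − x ∈ int C and y − f(y) ∈ int C; (c) λ(f) > 1 and r(f) < 1. -/

import Mathlib

/-!
For a constant `v`, write `f_ε(y) = (1 - ε) f(y) + ε v`. Given a fixed point `u` and a `d_T`-bounded
fixed point set, take `v = t u` with `t` so large that every fixed point is strictly below `v`.
Subhomogeneity gives `f v ≤ v`, so the damped orbit `y (n + 1) = f_{ε_n}(y n)`, `y 0 = v`, with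
`ε_n` decreasing to `0`, decreases and stays above `u`. Its limit is a fixed point of `f`, hence
`y n ≪ v` for some `n`, and `y n ≥ y (n + 1)` rearranges to
`(1 - ε_n) (y n - f (y n)) ≥ ε_n (v - y n) ≫ 0`. Starting from `u / t` instead gives a strict
subsolution; `exists_strict` treats both cases at once by allowing the order of `C` or of `-C`.

Monotone approximate orbits converge (`exists_limit`) by definition if `C` is regular. If `f` is
condensing, then since `y (n + 1) - f (y n) → 0` the sets `{y n}` and `{f (y n)}` have the same
measure of noncompactness, which must be `0`; a monotone sequence with this property is Cauchy by
normality. The limit is fixed because `f` is automatically norm continuous (`tendsto_map`).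

Conversely, strict sub- and supersolutions `x`, `y` enclose all fixed points (`sub_le_fix`,
`fix_le_super`), which bounds them in `d_T`, and after scaling `x` down the orbit of `y` decreases
to a fixed point (`exists_fix`). The Collatz–Wielandt conditions restate the existence of `x` and
`y`, since `f x ≫ x` holds if and only if `f x ≥ α x` for some `α > 1`.
-/

open Filter Topology Bornology

section ConeDefs

variable {X : Type*} [NormedAddCommGroup X] [NormedSpace ℝ X]

/-- `C` is a closed cone: a closed convex set with `l • C ⊆ C` for `l ≥ 0` and `C ∩ (-C) = {0}`. -/
def IsClosedCone (C : Set X) : Prop :=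
  IsClosed C ∧ Convex ℝ C ∧ (∀ l : ℝ, 0 ≤ l → ∀ x ∈ C, l • x ∈ C) ∧ C ∩ (-C) = {0}

/-- `C` is a normal cone: `0 ≤ x ≤ y` implies `‖x‖ ≤ κ * ‖y‖`. -/
def IsNormalCone (C : Set X) : Prop :=
  ∃ κ : ℝ, ∀ x y : X, x ∈ C → y - x ∈ C → ‖x‖ ≤ κ * ‖y‖

/-- `C` is a regular cone: every decreasing sequence in `C` converges in norm. -/
def IsRegularCone (C : Set X) : Prop :=
  ∀ x : ℕ → X, (∀ n, x n ∈ C) → (∀ n, x n - x (n + 1) ∈ C) →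
    ∃ l : X, Tendsto x atTop (𝓝 l)

/-- Thompson's metric: `d_T(x,y) = log inf {β ≥ 1 : β⁻¹ • x ≤ y ∧ y ≤ β • x}`,
where `≤` is the order induced by the cone `C`. -/
noncomputable def thompsonDist (C : Set X) (x y : X) : ℝ :=
  Real.log (sInf {β : ℝ | 1 ≤ β ∧ y - β⁻¹ • x ∈ C ∧ β • x - y ∈ C})

/-- `A` is bounded in Thompson's metric. -/
def TBounded (C A : Set X) : Prop :=
  ∃ d : ℝ, ∀ x ∈ A, ∀ y ∈ A, thompsonDist C x y ≤ d

/-- Kuratowski's measure of noncompactness for the norm: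
the infimum of all `d > 0` such that `A` admits a finite cover by sets of diameter at most `d`. -/
noncomputable def kuratowski (A : Set X) : ℝ :=
  sInf {d : ℝ | 0 < d ∧ ∃ (n : ℕ) (S : Fin n → Set X), A ⊆ ⋃ i, S i ∧
    ∀ i, IsBounded (S i) ∧ Metric.diam (S i) ≤ d}

/-- Kuratowski's measure of noncompactness for Thompson's metric: the infimum of all `d > 0`
such that `A` admits a finite cover by subsets of `interior C` of `d_T`-diameter at most `d`. -/
noncomputable def tauMNC (C A : Set X) : ℝ :=
  sInf {d : ℝ | 0 < d ∧ ∃ (n : ℕ) (S : Fin n → Set X), A ⊆ ⋃ i, S i ∧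
    ∀ i, S i ⊆ interior C ∧ ∀ x ∈ S i, ∀ y ∈ S i, thompsonDist C x y ≤ d}

/-- `f` is continuous and `γ`-condensing on `D`. -/
def GammaCondensing {X : Type*} [NormedAddCommGroup X] [NormedSpace ℝ X]
    (f : X → X) (D : Set X) : Prop :=
  ContinuousOn f D ∧ ∀ A ⊆ D, IsBounded A → 0 < kuratowski A →
    kuratowski (f '' A) < kuratowski A

/-- `f` is continuous and `τ`-condensing on `D`. -/
def TauCondensing (C : Set X) (f : X → X) (D : Set X) : Prop :=
  ContinuousOn f D ∧ ∀ A ⊆ D, TBounded C A → 0 < tauMNC C A →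
    tauMNC C (f '' A) < tauMNC C A

/-- `f` is nonexpansive with respect to Thompson's metric on `D`. -/
def TNonexpansiveOn (C : Set X) (f : X → X) (D : Set X) : Prop :=
  ∀ x ∈ D, ∀ y ∈ D, thompsonDist C (f x) (f y) ≤ thompsonDist C x y

/-- `f` is order-preserving on `D` for the order induced by `C`. -/
def OrderPreservingOn (C : Set X) (f : X → X) (D : Set X) : Prop :=
  ∀ x ∈ D, ∀ y ∈ D, y - x ∈ C → f y - f x ∈ C

/-- `f` is subhomogeneous on `D`: `f (t • x) ≤ t • f x` for `t ≥ 1`. -/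
def SubhomogeneousOn (C : Set X) (f : X → X) (D : Set X) : Prop :=
  ∀ t : ℝ, 1 ≤ t → ∀ x ∈ D, t • f x - f (t • x) ∈ C

/-- `M(x/y) = inf {β > 0 : x ≤ β • y}`, valued in `ℝ≥0∞` (`⊤` if no such `β` exists). -/
noncomputable def Mratio (C : Set X) (x y : X) : ENNReal :=
  sInf {b : ENNReal | ∃ β : ℝ, 0 < β ∧ b = ENNReal.ofReal β ∧ β • y - x ∈ C}

/-- `m(x/y) = sup {α > 0 : α • y ≤ x}`, valued in `ℝ≥0∞`. -/
noncomputable def mratio (C : Set X) (x y : X) : ENNReal :=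
  sSup {b : ENNReal | ∃ α : ℝ, 0 < α ∧ b = ENNReal.ofReal α ∧ x - α • y ∈ C}

/-- The upper Collatz–Wielandt number `r(f) = inf_{x ∈ int C} M(f(x)/x)`. -/
noncomputable def upperCW (C : Set X) (f : X → X) : ENNReal :=
  ⨅ x ∈ interior C, Mratio C (f x) x

/-- The lower Collatz–Wielandt number `λ(f) = sup_{x ∈ int C} m(f(x)/x)`. -/
noncomputable def lowerCW (C : Set X) (f : X → X) : ENNReal :=
  ⨆ x ∈ interior C, mratio C (f x) x

/-- The order-unit norm `‖x‖_u = inf {k > 0 : -k • u ≤ x ≤ k • u}`. -/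
noncomputable def orderUnitNorm (C : Set X) (u x : X) : ℝ :=
  sInf {k : ℝ | 0 < k ∧ x + k • u ∈ C ∧ k • u - x ∈ C}

end ConeDefs

/-! ### Order and Thompson metric -/

section ConeLemmas

variable {X : Type*} [NormedAddCommGroup X] [NormedSpace ℝ X] {C : Set X}

lemma IsClosedCone.smul_mem (hC : IsClosedCone C) {t : ℝ} (ht : 0 ≤ t) {x : X} (hx : x ∈ C) :
    t • x ∈ C := hC.2.2.1 t ht x hx

lemma IsClosedCone.add_mem (hC : IsClosedCone C) {x y : X} (hx : x ∈ C) (hy : y ∈ C) :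
    x + y ∈ C := by
  have h := hC.2.1 hx hy (by norm_num : (0 : ℝ) ≤ 1 / 2) (by norm_num : (0 : ℝ) ≤ 1 / 2)
    (by norm_num)
  have h2 := hC.smul_mem (by norm_num : (0 : ℝ) ≤ 2) h
  have e : x + y = (2 : ℝ) • ((1 / 2 : ℝ) • x + (1 / 2 : ℝ) • y) := by module
  rwa [e]

lemma IsClosedCone.zero_mem (hC : IsClosedCone C) : (0 : X) ∈ C := by
  have h : (0 : X) ∈ C ∩ (-C) := by rw [hC.2.2.2]; rfl
  exact h.1

lemma IsClosedCone.neg (hC : IsClosedCone C) : IsClosedCone (-C) := by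
  refine ⟨hC.1.neg, hC.2.1.neg, fun l hl x hx => ?_, ?_⟩
  · rw [Set.mem_neg, ← smul_neg]
    exact hC.smul_mem hl hx
  · rw [neg_neg, Set.inter_comm, hC.2.2.2]

/-- The order is transitive. -/
lemma IsClosedCone.le_trans (hC : IsClosedCone C) {x y z : X} (h1 : y - x ∈ C) (h2 : z - y ∈ C) :
    z - x ∈ C := by
  have e : z - x = (z - y) + (y - x) := by abel
  rw [e]
  exact hC.add_mem h2 h1

lemma IsClosedCone.int_add (hC : IsClosedCone C) {x y : X} (hx : x ∈ interior C) (hy : y ∈ C) :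
    x + y ∈ interior C := by
  have hopen : IsOpen ((fun z => z + y) '' interior C) :=
    (Homeomorph.addRight y).isOpenMap _ isOpen_interior
  refine interior_maximal ?_ hopen ⟨x, hx, rfl⟩
  rintro _ ⟨z, hz, rfl⟩
  exact hC.add_mem (interior_subset hz) hy

/-- Anything above an interior point is an interior point. -/
lemma IsClosedCone.int_of_le (hC : IsClosedCone C) {x y : X} (hx : x ∈ interior C)
    (h : y - x ∈ C) : y ∈ interior C := by
  have := hC.int_add hx h
  rwa [add_sub_cancel] at this

lemma IsClosedCone.int_smul (hC : IsClosedCone C) {t : ℝ} (ht : 0 < t) {x : X}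
    (hx : x ∈ interior C) : t • x ∈ interior C := by
  have hopen : IsOpen ((fun z => t • z) '' interior C) :=
    (Homeomorph.smulOfNeZero t ht.ne').isOpenMap _ isOpen_interior
  refine interior_maximal ?_ hopen ⟨x, hx, rfl⟩
  rintro _ ⟨z, hz, rfl⟩
  exact hC.smul_mem ht.le (interior_subset hz)

lemma exists_ball_add_mem {X : Type*} [NormedAddCommGroup X] {C : Set X} {u : X}
    (hu : u ∈ interior C) : ∃ δ > 0, ∀ v : X, ‖v‖ < δ → u + v ∈ C := by
  obtain ⟨δ, hδ, h⟩ := Metric.isOpen_iff.1 isOpen_interior u hu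
  refine ⟨δ, hδ, fun v hv => interior_subset (h ?_)⟩
  simpa using hv

lemma mem_interior_neg_iff {X : Type*} [NormedAddCommGroup X] {C : Set X} {x : X} :
    x ∈ interior (-C) ↔ -x ∈ interior C := by
  have h := (Homeomorph.neg X).preimage_interior C
  exact (Set.ext_iff.1 h x).symm

lemma exists_sub_smul_mem {u : X} (hu : u ∈ interior C) (x : X) :
    ∃ δ : ℝ, 0 < δ ∧ δ < 1 ∧ u - δ • x ∈ C := by
  obtain ⟨δ, hδ, h⟩ := exists_ball_add_mem hu
  have hx : 0 < ‖x‖ + 1 := by positivity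
  refine ⟨min (1 / 2) (δ / (2 * (‖x‖ + 1))), by positivity,
    (min_le_left _ _).trans_lt (by norm_num), ?_⟩
  rw [sub_eq_add_neg]
  apply h
  rw [norm_neg, norm_smul, Real.norm_of_nonneg (by positivity)]
  calc min (1 / 2) (δ / (2 * (‖x‖ + 1))) * ‖x‖
      ≤ (δ / (2 * (‖x‖ + 1))) * (‖x‖ + 1) := by
        gcongr
        · exact min_le_right _ _
        · linarith
    _ = δ / 2 := by field_simp
    _ < δ := by linarith

/-- Interior points are order units. -/
lemma IsClosedCone.exists_dom (hC : IsClosedCone C) {u : X} (hu : u ∈ interior C) (x : X) :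
    ∃ β : ℝ, 1 ≤ β ∧ β • u - x ∈ C := by
  obtain ⟨δ, hδ, hδ1, h⟩ := exists_sub_smul_mem hu x
  refine ⟨δ⁻¹, (one_le_inv₀ hδ).2 hδ1.le, ?_⟩
  have := hC.smul_mem (inv_nonneg.2 hδ.le) h
  rwa [smul_sub, inv_smul_smul₀ hδ.ne'] at this

lemma IsClosedCone.dom_mono (hC : IsClosedCone C) {β β' : ℝ} (h : β ≤ β') {x y : X} (hx : x ∈ C)
    (hxy : β • x - y ∈ C) : β' • x - y ∈ C := by
  have e : β' • x - y = (β • x - y) + (β' - β) • x := by module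
  rw [e]
  exact hC.add_mem hxy (hC.smul_mem (by linarith) hx)

/-- If `p ≤ β q` forces `p ≪ β q` for every `β ≥ 1`, then `p ≤ q`: the least admissible `β ≥ 1`
can be decreased unless it equals `1`. -/
lemma IsClosedCone.le_of_strict (hC : IsClosedCone C) {p q : X} (hq : q ∈ interior C)
    (h : ∀ β : ℝ, 1 ≤ β → β • q - p ∈ C → β • q - p ∈ interior C) : q - p ∈ C := by
  set S : Set ℝ := {β | 1 ≤ β ∧ β • q - p ∈ C} with hS
  have hcl : IsClosed S :=
    isClosed_Ici.inter (hC.1.preimage (by fun_prop : Continuous fun β : ℝ => β • q - p))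
  have hbd : BddBelow S := ⟨1, fun β hβ => hβ.1⟩
  have hmem : sInf S ∈ S := hcl.csInf_mem (hC.exists_dom hq p) hbd
  obtain ⟨h1, h2⟩ := hmem
  rcases h1.eq_or_lt with h1' | h1'
  · rw [← h1', one_smul] at h2
    exact h2
  exfalso
  obtain ⟨δ, hδ, -, hd⟩ := exists_sub_smul_mem (h _ h1 h2) q
  set β := sInf S with hβ
  have hmax : max 1 (β - δ) ∈ S := by
    refine ⟨le_max_left _ _, hC.dom_mono (le_max_right _ _) (interior_subset hq) ?_⟩
    have e : (β - δ) • q - p = β • q - p - δ • q := by module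
    rwa [e]
  have := csInf_le hbd hmax
  rw [← hβ] at this
  rcases max_cases 1 (β - δ) with hm | hm <;> linarith

/-- Thompson's distance is at most `d` exactly when each point is at most `exp d` times the
other; the infimum in its definition is attained because `C` is closed. -/
lemma IsClosedCone.thompson_le_iff (hC : IsClosedCone C) {x y : X} (hx : x ∈ interior C)
    (hy : y ∈ interior C) {d : ℝ} (hd : 0 ≤ d) :
    thompsonDist C x y ≤ d ↔ Real.exp d • y - x ∈ C ∧ Real.exp d • x - y ∈ C := by
  set S : Set ℝ := {β | 1 ≤ β ∧ β • y - x ∈ C ∧ β • x - y ∈ C} with hS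
  have hSe : {β : ℝ | 1 ≤ β ∧ y - β⁻¹ • x ∈ C ∧ β • x - y ∈ C} = S := by
    ext β
    simp only [hS, Set.mem_ofPred_eq]
    refine and_congr_right fun h1 => and_congr_left fun _ => ?_
    have hβ : 0 < β := by linarith
    constructor <;> intro h
    · have := hC.smul_mem hβ.le h
      rwa [smul_sub, smul_inv_smul₀ hβ.ne'] at this
    · have := hC.smul_mem (inv_nonneg.2 hβ.le) h
      rwa [smul_sub, inv_smul_smul₀ hβ.ne'] at this
  have hcl : IsClosed S :=
    isClosed_Ici.inter
      ((hC.1.preimage (by fun_prop : Continuous fun β : ℝ => β • y - x)).inter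
        (hC.1.preimage (by fun_prop : Continuous fun β : ℝ => β • x - y)))
  have hbd : BddBelow S := ⟨1, fun β hβ => hβ.1⟩
  have hne : S.Nonempty := by
    obtain ⟨β, hβ, h⟩ := hC.exists_dom hx y
    obtain ⟨β', hβ', h'⟩ := hC.exists_dom hy x
    exact ⟨max β β', hβ.trans (le_max_left _ _),
      hC.dom_mono (le_max_right _ _) (interior_subset hy) h',
      hC.dom_mono (le_max_left _ _) (interior_subset hx) h⟩
  have hmem : sInf S ∈ S := hcl.csInf_mem hne hbd
  rw [thompsonDist, hSe, Real.log_le_iff_le_exp (by linarith [hmem.1])]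
  constructor
  · intro h
    exact ⟨hC.dom_mono h (interior_subset hy) hmem.2.1,
      hC.dom_mono h (interior_subset hx) hmem.2.2⟩
  · intro h
    exact csInf_le hbd ⟨Real.one_le_exp hd, h⟩

lemma IsClosedCone.thompson_symm (hC : IsClosedCone C) {x y : X} (hx : x ∈ interior C)
    (hy : y ∈ interior C) {d : ℝ} (hd : 0 ≤ d) (h : thompsonDist C x y ≤ d) :
    thompsonDist C y x ≤ d :=
  (hC.thompson_le_iff hy hx hd).2 ((hC.thompson_le_iff hx hy hd).1 h).symm

lemma IsClosedCone.thompson_triangle (hC : IsClosedCone C) {x y z : X} (hx : x ∈ interior C)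
    (hy : y ∈ interior C) (hz : z ∈ interior C) {d e : ℝ} (hd : 0 ≤ d) (he : 0 ≤ e)
    (h : thompsonDist C x y ≤ d) (h' : thompsonDist C y z ≤ e) :
    thompsonDist C x z ≤ d + e := by
  obtain ⟨h1, h2⟩ := (hC.thompson_le_iff hx hy hd).1 h
  obtain ⟨h3, h4⟩ := (hC.thompson_le_iff hy hz he).1 h'
  refine (hC.thompson_le_iff hx hz (add_nonneg hd he)).2 ⟨?_, ?_⟩
  · have e' : Real.exp (d + e) • z - x =
        Real.exp d • (Real.exp e • z - y) + (Real.exp d • y - x) := by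
      rw [Real.exp_add]; module
    rw [e']
    exact hC.add_mem (hC.smul_mem (Real.exp_nonneg _) h3) h1
  · have e' : Real.exp (d + e) • x - z =
        Real.exp e • (Real.exp d • x - y) + (Real.exp e • y - z) := by
      rw [Real.exp_add]; module
    rw [e']
    exact hC.add_mem (hC.smul_mem (Real.exp_nonneg _) h2) h4

lemma IsNormalCone.exists_pos {X : Type*} [NormedAddCommGroup X] {C : Set X} (hn : IsNormalCone C) :
    ∃ κ : ℝ, 0 < κ ∧ ∀ x y : X, x ∈ C → y - x ∈ C → ‖x‖ ≤ κ * ‖y‖ := by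
  obtain ⟨κ, h⟩ := hn
  refine ⟨|κ| + 1, by positivity, fun x y hx hy => (h x y hx hy).trans ?_⟩
  gcongr
  linarith [le_abs_self κ]

/-- In a normal cone, Thompson-close points are norm-close. -/
lemma IsClosedCone.norm_sub_le_of_close (hC : IsClosedCone C) {κ : ℝ} (hκ : 0 < κ)
    (hn : ∀ x y : X, x ∈ C → y - x ∈ C → ‖x‖ ≤ κ * ‖y‖) {β : ℝ} (h1 : 1 ≤ β) (h2 : β ≤ 2)
    {p q : X} (hq : q ∈ C) (hpq : β • p - q ∈ C) (hqp : β • q - p ∈ C) :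
    ‖q - p‖ ≤ 5 * κ * (β - 1) * ‖p‖ := by
  have a1 : ‖β • q - p‖ ≤ κ * ‖(β * β - 1) • p‖ := by
    apply hn _ _ hqp
    have e : (β * β - 1) • p - (β • q - p) = β • (β • p - q) := by module
    rw [e]
    exact hC.smul_mem (by linarith) hpq
  have a2 : ‖q‖ ≤ κ * ‖β • p‖ := hn _ _ hq hpq
  rw [norm_smul, Real.norm_of_nonneg (by nlinarith)] at a1
  rw [norm_smul, Real.norm_of_nonneg (by linarith)] at a2
  have a3 : ‖q - p‖ ≤ ‖β • q - p‖ + (β - 1) * ‖q‖ := by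
    have e : q - p = (β • q - p) - (β - 1) • q := by module
    calc ‖q - p‖ = ‖(β • q - p) - (β - 1) • q‖ := by rw [← e]
      _ ≤ ‖β • q - p‖ + ‖(β - 1) • q‖ := _root_.norm_sub_le _ _
      _ = _ := by rw [norm_smul, Real.norm_of_nonneg (by linarith)]
  calc ‖q - p‖ ≤ κ * ((β * β - 1) * ‖p‖) + (β - 1) * (κ * (β * ‖p‖)) := by
        have := mul_le_mul_of_nonneg_left a2 (by linarith : (0 : ℝ) ≤ β - 1)
        linarith
    _ = κ * (β - 1) * ‖p‖ * (2 * β + 1) := by ring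
    _ ≤ κ * (β - 1) * ‖p‖ * 5 := by
        have : 0 ≤ κ * (β - 1) * ‖p‖ :=
          mul_nonneg (mul_nonneg hκ.le (by linarith)) (norm_nonneg _)
        gcongr
        linarith
    _ = _ := by ring

/-- An order-preserving subhomogeneous self-map of `interior C` is norm continuous. -/
lemma tendsto_map (hC : IsClosedCone C) (hnorm : IsNormalCone C) {f : X → X}
    (hf : Set.MapsTo f (interior C) (interior C)) (hop : OrderPreservingOn C f (interior C))
    (hsub : SubhomogeneousOn C f (interior C)) {y : ℕ → X} (hy : ∀ n, y n ∈ interior C) {l : X}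
    (hl : l ∈ interior C) (hyl : Tendsto y atTop (𝓝 l)) :
    Tendsto (fun n => f (y n)) atTop (𝓝 (f l)) := by
  obtain ⟨κ, hκ, hn⟩ := hnorm.exists_pos
  rw [Metric.tendsto_atTop] at hyl ⊢
  intro ε hε
  set δ : ℝ := min 1 (ε / (5 * κ * (‖f l‖ + 1))) with hδ
  have hδ0 : 0 < δ := by positivity
  have hδ1 : δ ≤ 1 := min_le_left _ _
  obtain ⟨r, hr, hball⟩ := exists_ball_add_mem (hC.int_smul hδ0 hl)
  obtain ⟨N, hN⟩ := hyl (r / 2) (by positivity)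
  refine ⟨N, fun n hnN => ?_⟩
  have hd : ‖y n - l‖ < r / 2 := by simpa [dist_eq_norm] using hN n hnN
  have c1 : (1 + δ) • l - y n ∈ C := by
    have e : (1 + δ) • l - y n = δ • l + -(y n - l) := by module
    rw [e]
    apply hball
    rw [norm_neg]
    linarith
  have c2 : (1 + δ) • y n - l ∈ C := by
    have e : (1 + δ) • y n - l = δ • l + (1 + δ) • (y n - l) := by module
    rw [e]
    apply hball
    rw [norm_smul, Real.norm_of_nonneg (by linarith)]
    nlinarith [norm_nonneg (y n - l)]
  have hb : (1 : ℝ) ≤ 1 + δ := by linarith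
  have hb0 : (0 : ℝ) < 1 + δ := by linarith
  have d1 : (1 + δ) • f l - f (y n) ∈ C :=
    hC.le_trans (hop _ (hy n) _ (hC.int_smul hb0 hl) c1) (hsub _ hb _ hl)
  have d2 : (1 + δ) • f (y n) - f l ∈ C :=
    hC.le_trans (hop _ hl _ (hC.int_smul hb0 (hy n)) c2) (hsub _ hb _ (hy n))
  have := hC.norm_sub_le_of_close hκ hn hb (by linarith) (interior_subset (hf (hy n))) d1 d2
  rw [dist_eq_norm]
  calc ‖f (y n) - f l‖ ≤ 5 * κ * (1 + δ - 1) * ‖f l‖ := this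
    _ = (5 * κ * ‖f l‖) * δ := by ring
    _ ≤ (5 * κ * ‖f l‖) * (ε / (5 * κ * (‖f l‖ + 1))) := by
        gcongr
        exact min_le_right _ _
    _ = ε * (‖f l‖ / (‖f l‖ + 1)) := by field_simp
    _ < ε * 1 := by
        gcongr
        rw [div_lt_one (by positivity)]
        linarith
    _ = ε := mul_one ε

end ConeLemmas

/-! ### Measures of noncompactness along a sequence -/

section Noncompactness

/-- Kuratowski's measure of noncompactness for a distance function `ρ` on `D`; it subsumes
`kuratowski` (`ρ = dist`, `D = univ`) and `tauMNC` (`ρ = thompsonDist C`, `D = interior C`). -/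
noncomputable def mnc {X : Type*} (ρ : X → X → ℝ) (D A : Set X) : ℝ :=
  sInf {d : ℝ | 0 < d ∧ ∃ (n : ℕ) (S : Fin n → Set X), A ⊆ ⋃ i, S i ∧
    ∀ i, S i ⊆ D ∧ ∀ x ∈ S i, ∀ y ∈ S i, ρ x y ≤ d}

lemma kuratowski_eq_mnc {X : Type*} [NormedAddCommGroup X] (A : Set X) :
    kuratowski A = mnc dist Set.univ A := by
  unfold kuratowski mnc
  congr 1
  ext d
  refine and_congr_right fun hd => exists_congr fun n => exists_congr fun S =>
    and_congr_right fun _ => forall_congr' fun i => ?_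
  constructor
  · rintro ⟨hb, hdiam⟩
    exact ⟨Set.subset_univ _, fun x hx y hy => (Metric.dist_le_diam_of_mem hb hx hy).trans hdiam⟩
  · rintro ⟨-, h⟩
    exact ⟨Metric.isBounded_iff.2 ⟨d, fun x hx y hy => h x hx y hy⟩,
      Metric.diam_le_of_forall_dist_le hd.le h⟩

/-- The sequence `y` can be coloured with finitely many colours so that terms of equal colour
are at `ρ`-distance at most `d`. -/
def Colorable {X : Type*} (ρ : X → X → ℝ) (y : ℕ → X) (d : ℝ) : Prop :=
  ∃ (k : ℕ) (c : ℕ → ℕ), (∀ n, c n < k) ∧ ∀ i j, c i = c j → ρ (y i) (y j) ≤ d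

lemma mnc_range {X : Type*} (ρ : X → X → ℝ) (D : Set X) (y : ℕ → X) (hy : ∀ n, y n ∈ D) :
    mnc ρ D (Set.range y) = sInf {d : ℝ | 0 < d ∧ Colorable ρ y d} := by
  unfold mnc
  congr 1
  ext d
  refine and_congr_right fun hd => ?_
  constructor
  · rintro ⟨n, S, hcov, hS⟩
    have : ∀ m, ∃ i, y m ∈ S i := fun m => Set.mem_iUnion.1 (hcov ⟨m, rfl⟩)
    choose c hc using this
    refine ⟨n, fun m => c m, fun m => (c m).2, fun i j hij => ?_⟩
    have hij' : c i = c j := Fin.ext hij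
    exact (hS (c i)).2 _ (hc i) _ (hij' ▸ hc j)
  · rintro ⟨k, c, hck, hc⟩
    refine ⟨k, fun i => y '' {m | c m = i}, ?_, fun i => ⟨?_, ?_⟩⟩
    · rintro _ ⟨m, rfl⟩
      exact Set.mem_iUnion.2 ⟨⟨c m, hck m⟩, m, rfl, rfl⟩
    · rintro _ ⟨m, -, rfl⟩
      exact hy m
    · rintro _ ⟨m, hm, rfl⟩ _ ⟨m', hm', rfl⟩
      exact hc _ _ (hm.trans hm'.symm)

/-- If `y (n + 1)` is asymptotically `ρ`-close to `g n` and passing from `y` to `g` would strictly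
decrease a positive measure of noncompactness, then `y` has measure `0`. Indeed a finite colouring
of `g` shifts to one of a tail of `y`, so passing to `g` does not decrease the measure. -/
lemma colorable_of_condensing {X : Type*} {ρ : X → X → ℝ} {D : Set X}
    (hrefl : ∀ x ∈ D, ρ x x ≤ 0)
    (hsymm : ∀ x ∈ D, ∀ y ∈ D, ∀ d : ℝ, 0 ≤ d → ρ x y ≤ d → ρ y x ≤ d)
    (htri : ∀ x ∈ D, ∀ y ∈ D, ∀ z ∈ D, ∀ d e : ℝ, 0 ≤ d → 0 ≤ e → ρ x y ≤ d → ρ y z ≤ e →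
      ρ x z ≤ d + e)
    {y g : ℕ → X} (hy : ∀ n, y n ∈ D) (hg : ∀ n, g n ∈ D)
    (hyb : ∃ d, ∀ i j, ρ (y i) (y j) ≤ d) (hgb : ∃ d, ∀ i j, ρ (g i) (g j) ≤ d)
    (hclose : ∀ η > 0, ∃ N, ∀ n ≥ N, ρ (y (n + 1)) (g n) ≤ η)
    (hcond : 0 < mnc ρ D (Set.range y) → mnc ρ D (Set.range g) < mnc ρ D (Set.range y)) :
    ∀ ε > 0, Colorable ρ y ε := by
  rw [mnc_range ρ D y hy, mnc_range ρ D g hg] at hcond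
  have hne : ∀ w : ℕ → X, (∃ d, ∀ i j, ρ (w i) (w j) ≤ d) →
      {d : ℝ | 0 < d ∧ Colorable ρ w d}.Nonempty := by
    rintro w ⟨d, hd⟩
    exact ⟨|d| + 1, by positivity, 1, fun _ => 0, fun _ => one_pos,
      fun i j _ => (hd i j).trans ((le_abs_self d).trans (by linarith))⟩
  have hbd : ∀ w : ℕ → X, BddBelow {d : ℝ | 0 < d ∧ Colorable ρ w d} :=
    fun w => ⟨0, fun d hd => hd.1.le⟩
  have hle : sInf {d : ℝ | 0 < d ∧ Colorable ρ y d} ≤ sInf {d : ℝ | 0 < d ∧ Colorable ρ g d} := by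
    refine le_csInf (hne g hgb) ?_
    rintro d ⟨hd, k, c, hck, hc⟩
    refine le_of_forall_pos_le_add fun η hη => ?_
    obtain ⟨N, hN⟩ := hclose (η / 2) (by positivity)
    refine csInf_le (hbd y) ⟨by positivity, k + N + 1,
      fun m => if m ≤ N then k + m else c (m - 1), fun m => ?_, fun i j hij => ?_⟩
    · dsimp only
      split_ifs with h
      · omega
      · have := hck (m - 1)
        omega
    · dsimp only at hij
      have hi := hck (i - 1)
      have hj := hck (j - 1)
      split_ifs at hij with h1 h2 h2
      · have : i = j := by omega
        subst this
        exact (hrefl _ (hy i)).trans (by positivity)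
      · omega
      · omega
      · obtain ⟨i, rfl⟩ : ∃ i', i = i' + 1 := ⟨i - 1, by omega⟩
        obtain ⟨j, rfl⟩ : ∃ j', j = j' + 1 := ⟨j - 1, by omega⟩
        simp only [Nat.add_sub_cancel] at hij
        have a1 := hN i (by omega)
        have a2 := hsymm _ (hy _) _ (hg _) _ (by positivity) (hN j (by omega))
        have a3 := htri _ (hg i) _ (hg j) _ (hy (j + 1)) _ _ hd.le (by positivity) (hc i j hij) a2
        have a4 := htri _ (hy (i + 1)) _ (hg i) _ (hy (j + 1)) _ _ (by positivity)
          (by positivity) a1 a3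
        linarith
  have h0 : sInf {d : ℝ | 0 < d ∧ Colorable ρ y d} ≤ 0 := by
    by_contra hpos
    exact absurd (hcond (not_le.1 hpos)) (not_lt.2 hle)
  intro ε hε
  obtain ⟨d, ⟨hd, k, c, hck, hc⟩, hdε⟩ := exists_lt_of_csInf_lt (hne y hyb) (h0.trans_lt hε)
  exact ⟨k, c, hck, fun i j hij => (hc i j hij).trans hdε.le⟩

end Noncompactness

/-! ### Convergence of monotone approximate orbits -/

section Convergence

variable {X : Type*} [NormedAddCommGroup X] [NormedSpace ℝ X] {C : Set X}

lemma IsClosedCone.antitone (hC : IsClosedCone C) {w : ℕ → X} (hw : ∀ n, w n - w (n + 1) ∈ C)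
    {m n : ℕ} (h : m ≤ n) : w m - w n ∈ C := by
  induction n, h using Nat.le_induction with
  | base => simpa using hC.zero_mem
  | succ n _ ih => exact hC.le_trans (hw n) ih

/-- A monotone sequence in a normal cone with measure of noncompactness `0` converges: some colour
recurs infinitely often, and normality squeezes the terms in between. -/
lemma tendsto_of_colorable [CompleteSpace X] (hC : IsClosedCone C) (hnorm : IsNormalCone C)
    {w : ℕ → X} (hw : ∀ n, w n - w (n + 1) ∈ C) (hcol : ∀ ε > 0, Colorable dist w ε) :
    ∃ l, Tendsto w atTop (𝓝 l) := by
  obtain ⟨κ, hκ, hn⟩ := hnorm.exists_pos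
  apply cauchySeq_tendsto_of_complete
  rw [Metric.cauchySeq_iff']
  intro ε hε
  obtain ⟨k, c, hck, hc⟩ := hcol (ε / (2 * κ)) (by positivity)
  obtain ⟨i, hi⟩ := Finite.exists_infinite_fiber (fun n => (⟨c n, hck n⟩ : Fin k))
  have hinf : ∀ m, ∃ n ≥ m, c n = i := by
    intro m
    obtain ⟨n, hn, hmn⟩ := (Set.infinite_coe_iff.1 hi).exists_gt m
    exact ⟨n, hmn.le, congrArg Fin.val hn⟩
  obtain ⟨N, -, hN⟩ := hinf 0
  refine ⟨N, fun m hm => ?_⟩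
  obtain ⟨m', hm', hcm'⟩ := hinf m
  have h1 : ‖w N - w m‖ ≤ κ * ‖w N - w m'‖ := by
    apply hn _ _ (hC.antitone hw hm)
    rw [sub_sub_sub_cancel_left]
    exact hC.antitone hw hm'
  have h2 := hc N m' (hN.trans hcm'.symm)
  rw [dist_eq_norm] at h2
  rw [dist_comm, dist_eq_norm]
  calc ‖w N - w m‖ ≤ κ * (ε / (2 * κ)) := h1.trans (by gcongr)
    _ = ε / 2 := by field_simp
    _ < ε := by linarith

/-- If `f` is condensing, an order-bounded approximate orbit of `f` has measure of noncompactness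
`0`, both for the norm and for Thompson's metric. -/
lemma colorable_orbit (hC : IsClosedCone C) (hnorm : IsNormalCone C) {f : X → X}
    (hf : Set.MapsTo f (interior C) (interior C)) (hop : OrderPreservingOn C f (interior C))
    (hcond : GammaCondensing f (interior C) ∨ TauCondensing C f (interior C))
    {a b : X} (ha : a ∈ interior C) {y : ℕ → X} (hay : ∀ n, y n - a ∈ C)
    (hyb : ∀ n, b - y n ∈ C) (hlim : Tendsto (fun n => y (n + 1) - f (y n)) atTop (𝓝 0)) :
    ∀ ε > 0, Colorable dist y ε := by
  obtain ⟨κ, hκ, hn⟩ := hnorm.exists_pos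
  have hy : ∀ n, y n ∈ interior C := fun n => hC.int_of_le ha (hay n)
  have hb : b ∈ interior C := hC.int_of_le (hy 0) (hyb 0)
  have hyn : ∀ n, ‖y n‖ ≤ κ * ‖b‖ := fun n => hn _ _ (interior_subset (hy n)) (hyb n)
  have hfy : ∀ n, f (y n) ∈ interior C := fun n => hf (hy n)
  have hfa : ∀ n, f (y n) - f a ∈ C := fun n => hop _ ha _ (hy n) (hay n)
  have hfb : ∀ n, f b - f (y n) ∈ C := fun n => hop _ (hy n) _ hb (hyb n)
  have hlim' : ∀ η > 0, ∃ N, ∀ n ≥ N, ‖y (n + 1) - f (y n)‖ < η := by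
    intro η hη
    obtain ⟨N, hN⟩ := (Metric.tendsto_atTop.1 hlim) η hη
    exact ⟨N, fun n h => by simpa using hN n h⟩
  have hrange : f '' Set.range y = Set.range fun n => f (y n) := (Set.range_comp f y).symm
  have hsubs : Set.range y ⊆ interior C := by
    rintro _ ⟨n, rfl⟩
    exact hy n
  have hbnd : ∀ (w : ℕ → X) (r : ℝ), (∀ n, ‖w n‖ ≤ r) → ∀ i j, dist (w i) (w j) ≤ r + r :=
    fun w r h i j => (dist_le_norm_add_norm _ _).trans (add_le_add (h i) (h j))
  have htb : ∀ p q : X, p ∈ interior C → ∀ w : ℕ → X, (∀ n, w n - p ∈ C) → (∀ n, q - w n ∈ C) →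
      ∃ d, ∀ i j, thompsonDist C (w i) (w j) ≤ d := by
    intro p q hp w h1 h2
    have hw : ∀ n, w n ∈ interior C := fun n => hC.int_of_le hp (h1 n)
    obtain ⟨β, hβ, h⟩ := hC.exists_dom hp q
    have key : ∀ i j, β • w i - w j ∈ C := by
      intro i j
      have e : β • w i - w j = β • (w i - p) + (β • p - q) + (q - w j) := by module
      rw [e]
      exact hC.add_mem (hC.add_mem (hC.smul_mem (by linarith) (h1 i)) h) (h2 j)
    refine ⟨Real.log β, fun i j => ?_⟩
    rw [hC.thompson_le_iff (hw i) (hw j) (Real.log_nonneg hβ), Real.exp_log (by linarith)]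
    exact ⟨key j i, key i j⟩
  rcases hcond with hg | ht
  · refine colorable_of_condensing (D := Set.univ) (g := fun n => f (y n)) (by simp) ?_ ?_
      (by simp) (by simp) ⟨_, hbnd y _ hyn⟩
      ⟨_, hbnd _ _ fun n => hn _ _ (interior_subset (hfy n)) (hfb n)⟩ ?_ ?_
    · intro x _ z _ d _ h
      rwa [dist_comm]
    · intro x _ z _ w _ d e _ _ h h'
      exact (dist_triangle _ _ _).trans (add_le_add h h')
    · intro η hη
      obtain ⟨N, hN⟩ := hlim' η hη
      exact ⟨N, fun n h => by rw [dist_eq_norm]; exact (hN n h).le⟩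
    · rw [← kuratowski_eq_mnc, ← kuratowski_eq_mnc, ← hrange]
      refine hg.2 _ hsubs (Metric.isBounded_iff.2 ⟨κ * ‖b‖ + κ * ‖b‖, ?_⟩)
      rintro _ ⟨i, rfl⟩ _ ⟨j, rfl⟩
      exact hbnd y _ hyn i j
  · have hybd := htb a b ha y hay hyb
    have hcol := colorable_of_condensing (ρ := thompsonDist C) (D := interior C)
      (g := fun n => f (y n)) (y := y)
      (fun x hx => (hC.thompson_le_iff hx hx le_rfl).2 (by simp [hC.zero_mem]))
      (fun x hx z hz d hd h => hC.thompson_symm hx hz hd h)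
      (fun x hx z hz w hw d e hd he h h' => hC.thompson_triangle hx hz hw hd he h h')
      hy hfy hybd (htb (f a) (f b) (hf ha) _ hfa hfb)
      (by
        intro η hη
        -- Both sequences stay above an interior point, so norm-closeness is `d_T`-closeness.
        have hδ : 0 < Real.exp η - 1 := by linarith [Real.add_one_lt_exp hη.ne']
        obtain ⟨r1, hr1, hb1⟩ := exists_ball_add_mem (hC.int_smul hδ ha)
        obtain ⟨r2, hr2, hb2⟩ := exists_ball_add_mem (hC.int_smul hδ (hf ha))
        obtain ⟨N, hN⟩ := hlim' (min r1 r2) (lt_min hr1 hr2)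
        refine ⟨N, fun n h => (hC.thompson_le_iff (hy _) (hfy _) hη.le).2 ⟨?_, ?_⟩⟩
        · have e : Real.exp η • f (y n) - y (n + 1) = (Real.exp η - 1) • (f (y n) - f a) +
              ((Real.exp η - 1) • f a + -(y (n + 1) - f (y n))) := by module
          rw [e]
          refine hC.add_mem (hC.smul_mem hδ.le (hfa n)) (hb2 _ ?_)
          rw [norm_neg]
          exact (hN n h).trans_le (min_le_right _ _)
        · have e : Real.exp η • y (n + 1) - f (y n) = (Real.exp η - 1) • (y (n + 1) - a) +
              ((Real.exp η - 1) • a + (y (n + 1) - f (y n))) := by module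
          rw [e]
          exact hC.add_mem (hC.smul_mem hδ.le (hay _)) (hb1 _ ((hN n h).trans_le
            (min_le_left _ _))))
      (by
        have := ht.2 _ hsubs (by
          obtain ⟨d, hd⟩ := hybd
          refine ⟨d, ?_⟩
          rintro _ ⟨i, rfl⟩ _ ⟨j, rfl⟩
          exact hd i j)
        rw [hrange] at this
        exact this)
    intro ε hε
    set M : ℝ := 5 * κ * (κ * ‖b‖ + 1) with hM
    have hM0 : 0 < M := by positivity
    set β : ℝ := 1 + min 1 (ε / M) with hβ
    have hβ1 : 1 < β := by
      have : 0 < min 1 (ε / M) := by positivity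
      linarith
    have hβ2 : β ≤ 2 := by linarith [min_le_left 1 (ε / M)]
    obtain ⟨k, c, hck, hc⟩ := hcol (Real.log β) (Real.log_pos hβ1)
    refine ⟨k, c, hck, fun i j hij => ?_⟩
    have h := (hC.thompson_le_iff (hy i) (hy j) (Real.log_pos hβ1).le).1 (hc i j hij)
    rw [Real.exp_log (by linarith)] at h
    have h3 := hC.norm_sub_le_of_close hκ hn hβ1.le hβ2 (interior_subset (hy i)) h.1 h.2
    rw [dist_eq_norm]
    calc ‖y i - y j‖ ≤ 5 * κ * (β - 1) * ‖y j‖ := h3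
      _ = 5 * κ * ‖y j‖ * min 1 (ε / M) := by rw [hβ]; ring
      _ ≤ M * (ε / M) := by
          have := hyn j
          rw [hM]
          gcongr
          · linarith
          · exact min_le_right _ _
      _ = ε := by field_simp

/-- A monotone, order-bounded approximate orbit of `f` converges to a fixed point of `f`. -/
lemma exists_limit [CompleteSpace X] (hC : IsClosedCone C) (hnorm : IsNormalCone C) {f : X → X}
    (hf : Set.MapsTo f (interior C) (interior C)) (hop : OrderPreservingOn C f (interior C))
    (hsub : SubhomogeneousOn C f (interior C))
    (hcond : IsRegularCone C ∨ GammaCondensing f (interior C) ∨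
      TauCondensing C f (interior C))
    {a b : X} (ha : a ∈ interior C) {y : ℕ → X} (hay : ∀ n, y n - a ∈ C)
    (hyb : ∀ n, b - y n ∈ C)
    (hmono : (∀ n, y n - y (n + 1) ∈ C) ∨ (∀ n, y (n + 1) - y n ∈ C))
    (hlim : Tendsto (fun n => y (n + 1) - f (y n)) atTop (𝓝 0)) :
    ∃ l ∈ interior C, f l = l ∧ Tendsto y atTop (𝓝 l) := by
  have hy : ∀ n, y n ∈ interior C := fun n => hC.int_of_le ha (hay n)
  have hconv : ∃ l, Tendsto y atTop (𝓝 l) := by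
    rcases hcond with hreg | hcond
    · rcases hmono with h | h
      · exact hreg y (fun n => interior_subset (hy n)) h
      · obtain ⟨l, hl⟩ := hreg (fun n => b - y n) hyb (fun n => by
          rw [sub_sub_sub_cancel_left]
          exact h n)
        exact ⟨b - l, by simpa using hl.const_sub b⟩
    · have hcol := colorable_orbit hC hnorm hf hop hcond ha hay hyb hlim
      rcases hmono with h | h
      · exact tendsto_of_colorable hC hnorm h hcol
      · obtain ⟨l, hl⟩ := tendsto_of_colorable (w := fun n => -y n) hC hnorm
          (fun n => by
            have e : -y n - -y (n + 1) = y (n + 1) - y n := by abel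
            rw [e]
            exact h n)
          (fun ε hε => by
            obtain ⟨k, c, hck, hc⟩ := hcol ε hε
            exact ⟨k, c, hck, fun i j hij => by simpa using hc i j hij⟩)
        exact ⟨-l, by simpa using hl.neg⟩
  obtain ⟨l, hl⟩ := hconv
  have hla : l - a ∈ C := hC.1.mem_of_tendsto (hl.sub_const a) (Eventually.of_forall hay)
  have hlC := hC.int_of_le ha hla
  refine ⟨l, hlC, ?_, hl⟩
  have h1 := tendsto_map hC hnorm hf hop hsub hy hlC hl
  have h2 : Tendsto (fun n => y (n + 1)) atTop (𝓝 l) := hl.comp (tendsto_add_atTop_nat 1)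
  have h3 := h2.sub hlim
  simp only [sub_sub_cancel, sub_zero] at h3
  exact tendsto_nhds_unique h1 h3

end Convergence

/-! ### The equivalences -/

section Main

variable {X : Type*} [NormedAddCommGroup X] [NormedSpace ℝ X] {C : Set X}

/-- The weights `1 / (n + 2)` of the damped iteration. -/
noncomputable def dampWeight (n : ℕ) : ℝ := 1 / ((n : ℝ) + 2)

/-- The damped iteration `y (n + 1) = (1 - ε n) • f (y n) + ε n • v` started at `v`. -/
noncomputable def dampedOrbit (f : X → X) (v : X) : ℕ → X
  | 0 => v
  | n + 1 => (1 - dampWeight n) • f (dampedOrbit f v n) + dampWeight n • v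

/-- Let `K` be `C` or `-C`, with `v` a supersolution (`f v ≤ v`) above a fixed point `u` in the
order of `K`. If every fixed point is strictly `K`-below `v`, then there is a strict supersolution.
The damped orbit of `v` decreases in the order of `K` to a fixed point, so it is eventually strictly
below `v`; then `(1 - ε) (y - f y) ≥ ε (v - y)` shows that `y` is a strict supersolution. The case
`K = -C` provides strict subsolutions for the order of `C`. -/
lemma exists_strict [CompleteSpace X] (hC : IsClosedCone C) (hnorm : IsNormalCone C) {f : X → X}
    (hf : Set.MapsTo f (interior C) (interior C)) (hop : OrderPreservingOn C f (interior C))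
    (hsub : SubhomogeneousOn C f (interior C))
    (hcond : IsRegularCone C ∨ GammaCondensing f (interior C) ∨
      TauCondensing C f (interior C))
    {K : Set X} (hK : K = C ∨ K = -C) {u v : X} (hu : u ∈ interior C) (hv : v ∈ interior C)
    (hfu : f u = u) (huv : v - u ∈ K) (hfv : v - f v ∈ K)
    (hfix : ∀ z ∈ interior C, f z = z → v - z ∈ interior K) :
    ∃ y ∈ interior C, y - f y ∈ interior K := by
  have hKC : IsClosedCone K := by
    rcases hK with rfl | rfl
    · exact hC
    · exact hC.neg
  have hopK : OrderPreservingOn K f (interior C) := by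
    rcases hK with rfl | rfl
    · exact hop
    · intro x hx y hy h
      rw [Set.mem_neg, neg_sub] at h ⊢
      exact hop y hy x hx h
  have hint : ∀ y, y - u ∈ K → v - y ∈ K → y ∈ interior C := by
    intro y h1 h2
    rcases hK with rfl | rfl
    · exact hC.int_of_le hu h1
    · rw [Set.mem_neg, neg_sub] at h2
      exact hC.int_of_le hv h2
  have hε : ∀ n, 0 < dampWeight n ∧ dampWeight n < 1 := by
    intro n
    unfold dampWeight
    have : (0 : ℝ) ≤ n := n.cast_nonneg
    exact ⟨by positivity, by rw [div_lt_one (by positivity)]; linarith⟩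
  have hεm : ∀ n, dampWeight (n + 1) ≤ dampWeight n := by
    intro n
    unfold dampWeight
    push_cast
    have : (0 : ℝ) ≤ n := n.cast_nonneg
    gcongr
    linarith
  set y := dampedOrbit f v with hydef
  have hy0 : y 0 = v := rfl
  have hys : ∀ n, y (n + 1) = (1 - dampWeight n) • f (y n) + dampWeight n • v := fun n => rfl
  have hbox : ∀ n, y n - u ∈ K ∧ v - y n ∈ K := by
    intro n
    induction n with
    | zero => rw [hy0]; exact ⟨huv, by simpa using hKC.zero_mem⟩
    | succ n ih =>
      obtain ⟨h1, h2⟩ := ih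
      have hyn := hint _ h1 h2
      have h3 := hopK _ hu _ hyn h1
      rw [hfu] at h3
      have h4 := hKC.le_trans (hopK _ hyn _ hv h2) hfv
      rw [hys]
      constructor
      · have e : (1 - dampWeight n) • f (y n) + dampWeight n • v - u =
            (1 - dampWeight n) • (f (y n) - u) + dampWeight n • (v - u) := by module
        rw [e]
        exact hKC.add_mem (hKC.smul_mem (by linarith [hε n]) h3)
          (hKC.smul_mem (hε n).1.le huv)
      · have e : v - ((1 - dampWeight n) • f (y n) + dampWeight n • v) =
            (1 - dampWeight n) • (v - f (y n)) := by module
        rw [e]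
        exact hKC.smul_mem (by linarith [hε n]) h4
  have hyC : ∀ n, y n ∈ interior C := fun n => hint _ (hbox n).1 (hbox n).2
  have hfyv : ∀ n, v - f (y n) ∈ K :=
    fun n => hKC.le_trans (hopK _ (hyC n) _ hv (hbox n).2) hfv
  have hanti : ∀ n, y n - y (n + 1) ∈ K := by
    intro n
    induction n with
    | zero => exact (hbox 1).2
    | succ n ih =>
      have h1 := hopK _ (hyC _) _ (hyC _) ih
      have e : y (n + 1) - y (n + 1 + 1) = (1 - dampWeight n) • (f (y n) - f (y (n + 1))) +
          (dampWeight n - dampWeight (n + 1)) • (v - f (y (n + 1))) := by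
        rw [hys (n + 1), hys n]; module
      rw [e]
      exact hKC.add_mem (hKC.smul_mem (by linarith [hε n]) h1)
        (hKC.smul_mem (by linarith [hεm n]) (hfyv _))
  have hwlim : Tendsto dampWeight atTop (𝓝 0) := by
    have := (tendsto_const_div_atTop_nhds_zero_nat (1 : ℝ)).comp (tendsto_add_atTop_nat 2)
    refine this.congr fun n => ?_
    simp [dampWeight]
  obtain ⟨κ, hκ, hn⟩ := hnorm.exists_pos
  -- `v - f (y n)` is bounded, because `f (y n)` lies in the order interval between `u` and `v`.
  have hfbd : ∃ r, ∀ n, ‖v - f (y n)‖ ≤ r := by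
    have hfu' : ∀ n, f (y n) - u ∈ K := fun n => by
      have := hopK _ hu _ (hyC n) (hbox n).1
      rwa [hfu] at this
    have key : ∀ n, ‖v - f (y n)‖ ≤ κ * ‖v - u‖ := by
      intro n
      rcases hK with rfl | rfl
      · apply hn _ _ (hfyv n)
        rw [sub_sub_sub_cancel_left]
        exact hfu' n
      · have h1 := hfyv n
        have h2 := hfu' n
        rw [Set.mem_neg, neg_sub] at h1 h2
        rw [norm_sub_rev, norm_sub_rev v u]
        apply hn _ _ h1
        rw [sub_sub_sub_cancel_right]
        exact h2
    exact ⟨_, key⟩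
  have hlim : Tendsto (fun n => y (n + 1) - f (y n)) atTop (𝓝 0) := by
    obtain ⟨r, hr⟩ := hfbd
    have e : ∀ n, y (n + 1) - f (y n) = dampWeight n • (v - f (y n)) := by
      intro n
      rw [hys]; module
    have hb : ∀ n, ‖y (n + 1) - f (y n)‖ ≤ dampWeight n * r := by
      intro n
      rw [e, norm_smul, Real.norm_of_nonneg (hε n).1.le]
      exact mul_le_mul_of_nonneg_left (hr n) (hε n).1.le
    exact squeeze_zero_norm hb (by simpa using hwlim.mul_const r)
  obtain ⟨l, hlC, hfl, hl⟩ : ∃ l ∈ interior C, f l = l ∧ Tendsto y atTop (𝓝 l) := by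
    rcases hK with rfl | rfl
    · exact exists_limit hC hnorm hf hop hsub hcond hu (fun n => (hbox n).1)
        (fun n => (hbox n).2) (Or.inl hanti) hlim
    · simp only [Set.mem_neg, neg_sub] at hbox hanti
      exact exists_limit hC hnorm hf hop hsub hcond hv (fun n => (hbox n).2)
        (fun n => (hbox n).1) (Or.inr hanti) hlim
  have hev : ∀ᶠ n in atTop, v - y n ∈ interior K :=
    (hl.const_sub v).eventually (isOpen_interior.mem_nhds (hfix l hlC hfl))
  obtain ⟨n, hvn⟩ := hev.exists
  refine ⟨y n, hyC n, ?_⟩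
  have h1 : 0 < 1 - dampWeight n := by linarith [hε n]
  have e : y n - f (y n) = (1 - dampWeight n)⁻¹ • (dampWeight n • (v - y n) +
      (y n - y (n + 1))) := by
    rw [eq_inv_smul_iff₀ h1.ne', hys]; module
  rw [e]
  exact hKC.int_smul (inv_pos.2 h1) (hKC.int_add (hKC.int_smul (hε n).1 hvn) (hanti n))

lemma one_lt_lowerCW_iff (hC : IsClosedCone C) {f : X → X} :
    1 < lowerCW C f ↔ ∃ x ∈ interior C, f x - x ∈ interior C := by
  unfold lowerCW mratio
  simp only [lt_iSup_iff, lt_sSup_iff]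
  constructor
  · rintro ⟨x, hx, _, ⟨α, hα, rfl, h⟩, h1⟩
    rw [ENNReal.one_lt_ofReal] at h1
    refine ⟨x, hx, ?_⟩
    have e : f x - x = (α - 1) • x + (f x - α • x) := by module
    rw [e]
    exact hC.int_add (hC.int_smul (by linarith) hx) h
  · rintro ⟨x, hx, h⟩
    obtain ⟨δ, hδ, -, hd⟩ := exists_sub_smul_mem h x
    refine ⟨x, hx, _, ⟨1 + δ, by linarith, rfl, ?_⟩, ?_⟩
    · have e : f x - (1 + δ) • x = f x - x - δ • x := by module
      rwa [e]
    · rw [ENNReal.one_lt_ofReal]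
      linarith

lemma upperCW_lt_one_iff (hC : IsClosedCone C) {f : X → X} :
    upperCW C f < 1 ↔ ∃ y ∈ interior C, y - f y ∈ interior C := by
  unfold upperCW Mratio
  simp only [iInf_lt_iff, sInf_lt_iff]
  constructor
  · rintro ⟨x, hx, _, ⟨β, hβ, rfl, h⟩, h1⟩
    rw [ENNReal.ofReal_lt_one] at h1
    refine ⟨x, hx, ?_⟩
    have e : x - f x = (1 - β) • x + (β • x - f x) := by module
    rw [e]
    exact hC.int_add (hC.int_smul (by linarith) hx) h
  · rintro ⟨x, hx, h⟩
    obtain ⟨δ, hδ, hδ1, hd⟩ := exists_sub_smul_mem h x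
    refine ⟨x, hx, _, ⟨1 - δ, by linarith, rfl, ?_⟩, ?_⟩
    · have e : (1 - δ) • x - f x = x - f x - δ • x := by module
      rwa [e]
    · rw [ENNReal.ofReal_lt_one]
      linarith

/-- Every fixed point lies above every strict subsolution. -/
lemma sub_le_fix (hC : IsClosedCone C) {f : X → X} (hop : OrderPreservingOn C f (interior C))
    (hsub : SubhomogeneousOn C f (interior C)) {x z : X} (hx : x ∈ interior C)
    (hfx : f x - x ∈ interior C) (hz : z ∈ interior C) (hfz : f z = z) : z - x ∈ C := by
  refine hC.le_of_strict hz fun β hβ h => ?_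
  have h1 := hop _ hx _ (hC.int_smul (by linarith) hz) h
  have h2 := hsub β hβ z hz
  rw [hfz] at h2
  have e : β • z - x = (f x - x) + (β • z - f (β • z) + (f (β • z) - f x)) := by abel
  rw [e]
  exact hC.int_add hfx (hC.add_mem h2 h1)

/-- Every fixed point lies below every strict supersolution. -/
lemma fix_le_super (hC : IsClosedCone C) {f : X → X} (hop : OrderPreservingOn C f (interior C))
    (hsub : SubhomogeneousOn C f (interior C)) {y z : X} (hy : y ∈ interior C)
    (hfy : y - f y ∈ interior C) (hz : z ∈ interior C) (hfz : f z = z) : y - z ∈ C := by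
  refine hC.le_of_strict hy fun β hβ h => ?_
  have h1 := hop _ hz _ (hC.int_smul (by linarith) hy) h
  have h2 := hsub β hβ y hy
  rw [hfz] at h1
  have e : β • y - z = β • (y - f y) + (β • f y - f (β • y) + (f (β • y) - z)) := by module
  rw [e]
  exact hC.int_add (hC.int_smul (by linarith) hfy) (hC.add_mem h2 h1)

/-- Below a supersolution and above a subsolution there is a fixed point. -/
lemma exists_fix [CompleteSpace X] (hC : IsClosedCone C) (hnorm : IsNormalCone C) {f : X → X}
    (hf : Set.MapsTo f (interior C) (interior C)) (hop : OrderPreservingOn C f (interior C))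
    (hsub : SubhomogeneousOn C f (interior C))
    (hcond : IsRegularCone C ∨ GammaCondensing f (interior C) ∨
      TauCondensing C f (interior C))
    {x y : X} (hx : x ∈ interior C) (hfx : f x - x ∈ C) (hfy : y - f y ∈ C)
    (hxy : y - x ∈ C) : ∃ z ∈ interior C, f z = z := by
  have hy : y ∈ interior C := hC.int_of_le hx hxy
  have hs : ∀ n, f^[n + 1] y = f (f^[n] y) := fun n => Function.iterate_succ_apply' f n y
  have hlow : ∀ n, f^[n] y - x ∈ C := by
    intro n
    induction n with
    | zero => exact hxy
    | succ n ih =>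
      rw [hs]
      exact hC.le_trans hfx (hop _ hx _ (hC.int_of_le hx ih) ih)
  have hi : ∀ n, f^[n] y ∈ interior C := fun n => hC.int_of_le hx (hlow n)
  have hanti : ∀ n, f^[n] y - f^[n + 1] y ∈ C := by
    intro n
    induction n with
    | zero => exact hfy
    | succ n ih =>
      rw [hs (n + 1)]
      nth_rewrite 1 [hs n]
      exact hop _ (hi _) _ (hi _) ih
  obtain ⟨l, hl, hfl, -⟩ := exists_limit hC hnorm hf hop hsub hcond hx (b := y)
    (y := fun n => f^[n] y) hlow
    (fun n => hC.antitone (w := fun n => f^[n] y) hanti (Nat.zero_le n)) (Or.inl hanti)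
    (by simp only [hs, sub_self]; exact tendsto_const_nhds)
  exact ⟨l, hl, hfl⟩

end Main

/-- For an order-preserving subhomogeneous `f : int C → int C` (with `C` regular
or `f` `γ`- or `τ`-condensing), the following are equivalent: (a) `Fix(f)` is nonempty and
`d_T`-bounded; (b) `∃ x, f x ≫ x` and `∃ y, f y ≪ y`; (c) `λ(f) > 1` and `r(f) < 1`. -/
theorem stmt7 {X : Type*} [NormedAddCommGroup X] [NormedSpace ℝ X] [CompleteSpace X]
    {C : Set X} (hC : IsClosedCone C) (hnorm : IsNormalCone C)
    (hne : (interior C).Nonempty) {f : X → X}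
    (hf : Set.MapsTo f (interior C) (interior C))
    (hop : OrderPreservingOn C f (interior C))
    (hsub : SubhomogeneousOn C f (interior C))
    (hcond : IsRegularCone C ∨ GammaCondensing f (interior C) ∨
      TauCondensing C f (interior C)) :
    ((({x ∈ interior C | f x = x}).Nonempty ∧ TBounded C {x ∈ interior C | f x = x}) ↔
      ((∃ x ∈ interior C, f x - x ∈ interior C) ∧
        (∃ y ∈ interior C, y - f y ∈ interior C))) ∧
    (((∃ x ∈ interior C, f x - x ∈ interior C) ∧
        (∃ y ∈ interior C, y - f y ∈ interior C)) ↔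
      (1 < lowerCW C f ∧ upperCW C f < 1)) := by
  have hhalf : ∀ {t : ℝ} {x : X}, 1 ≤ t → x ∈ interior C →
      f (t⁻¹ • x) - t⁻¹ • f x ∈ C := by
    intro t x ht hx
    have ht0 : 0 < t := by linarith
    have h := hC.smul_mem (inv_nonneg.2 ht0.le)
      (hsub t ht _ (hC.int_smul (inv_pos.2 ht0) hx))
    rwa [smul_inv_smul₀ ht0.ne', smul_sub, inv_smul_smul₀ ht0.ne'] at h
  refine ⟨⟨?_, ?_⟩, by rw [one_lt_lowerCW_iff hC, upperCW_lt_one_iff hC]⟩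
  · rintro ⟨⟨u, hu, hfu⟩, d, hd⟩
    set R : ℝ := Real.exp |d| with hR
    have hR0 : 0 < R := Real.exp_pos _
    have hR1 : 1 ≤ R := Real.one_le_exp (abs_nonneg d)
    have hbox : ∀ z ∈ interior C, f z = z → R • z - u ∈ C ∧ R • u - z ∈ C := fun z hz hfz =>
      (hC.thompson_le_iff hu hz (abs_nonneg d)).1
        ((hd u ⟨hu, hfu⟩ z ⟨hz, hfz⟩).trans (le_abs_self d))
    set t : ℝ := R + 1 with ht
    have ht0 : 0 < t := by linarith
    have ht1 : 1 ≤ t := by linarith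
    constructor
    · have hv : t⁻¹ • u ∈ interior C := hC.int_smul (inv_pos.2 ht0) hu
      obtain ⟨y, hy, h⟩ := exists_strict hC hnorm hf hop hsub hcond (K := -C) (Or.inr rfl)
        hu hv hfu
        (by
          rw [Set.mem_neg, neg_sub]
          have e : u - t⁻¹ • u = (1 - t⁻¹) • u := by module
          rw [e]
          exact hC.smul_mem (by linarith [inv_le_one_of_one_le₀ ht1]) (interior_subset hu))
        (by
          rw [Set.mem_neg, neg_sub]
          have := hhalf ht1 hu
          rwa [hfu] at this)
        (by
          intro z hz hfz
          rw [mem_interior_neg_iff, neg_sub]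
          have e : z - t⁻¹ • u = t⁻¹ • (z + (R • z - u)) := by
            rw [eq_inv_smul_iff₀ ht0.ne', smul_sub, smul_inv_smul₀ ht0.ne', ht]; module
          rw [e]
          exact hC.int_smul (inv_pos.2 ht0) (hC.int_add hz (hbox z hz hfz).1))
      rw [mem_interior_neg_iff, neg_sub] at h
      exact ⟨y, hy, h⟩
    · refine exists_strict hC hnorm hf hop hsub hcond (K := C) (Or.inl rfl)
        hu (hC.int_smul ht0 hu) hfu ?_ ?_ ?_
      · have e : t • u - u = R • u := by rw [ht]; module
        rw [e]
        exact hC.smul_mem hR0.le (interior_subset hu)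
      · have := hsub t ht1 u hu
        rwa [hfu] at this
      · intro z hz hfz
        have e : t • u - z = u + (R • u - z) := by rw [ht]; module
        rw [e]
        exact hC.int_add hu (hbox z hz hfz).2
  · rintro ⟨⟨x, hx, hfx⟩, y, hy, hfy⟩
    obtain ⟨β, hβ, hxy⟩ := hC.exists_dom hx y
    obtain ⟨t, ht, hyx⟩ := hC.exists_dom hy x
    have ht0 : 0 < t := by linarith
    constructor
    · -- A subsolution stays one when it is scaled down, so it may be taken below `y`.
      obtain ⟨z, hz, hfz⟩ := exists_fix hC hnorm hf hop hsub hcond (x := t⁻¹ • x) (y := y)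
        (hC.int_smul (inv_pos.2 ht0) hx)
        (by
          have e : f (t⁻¹ • x) - t⁻¹ • x = (f (t⁻¹ • x) - t⁻¹ • f x) + t⁻¹ • (f x - x) := by
            module
          rw [e]
          exact hC.add_mem (hhalf ht hx)
            (hC.smul_mem (inv_nonneg.2 ht0.le) (interior_subset hfx)))
        (interior_subset hfy)
        (by
          have := hC.smul_mem (inv_nonneg.2 ht0.le) hyx
          rwa [smul_sub, inv_smul_smul₀ ht0.ne'] at this)
      exact ⟨z, hz, hfz⟩
    · have key : ∀ z ∈ interior C, f z = z → ∀ w ∈ interior C, f w = w → β • z - w ∈ C := by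
        intro z hz hfz w hw hfw
        have e : β • z - w = β • (z - x) + (β • x - y) + (y - w) := by module
        rw [e]
        exact hC.add_mem (hC.add_mem
          (hC.smul_mem (by linarith) (sub_le_fix hC hop hsub hx hfx hz hfz)) hxy)
          (fix_le_super hC hop hsub hy hfy hw hfw)
      refine ⟨Real.log β, ?_⟩
      rintro z ⟨hz, hfz⟩ w ⟨hw, hfw⟩
      rw [hC.thompson_le_iff hz hw (Real.log_nonneg hβ), Real.exp_log (by linarith)]
      exact ⟨key w hw hfw z hz hfz, key z hz hfz w hw hfw⟩
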